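/- Let μ and μ' be stable matchings, and let u, v ∈ μ ∪ μ' be two distinct vertices of Γ*(μ,μ') lying in the same nontrivial weakly connected component of Γ*(μ,μ'). Then v is linked to u. -/

import Mathlib

/-!
Call two pairs `a`, `b` *tied* when `e_a + e_b` or `e_a - e_b` lies in `E`; this is an equivalence
relation (`Tied.trans`), and it implies linkedness. Write `U = μ ∪ μ'`. The inequalities `x_p ≥ 0`
with `p` acceptable and outside `U` are tight at `μ` and `μ'`, so `e_p ∈ E` for such `p`, and
vectors of `E` may be restricted to `U`. Consequently (`tied_of_chi`), if `±x(S) ≥ ±1` is valid for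
all stable matchings and `S` meets `μ` only in `a` and `μ'` only in `b`, then `a` and `b` are tied.
Two families of inequalities of this form are needed.

* Degree constraints (`tied_of_row`, `tied_of_col`): two pairs of `U` sharing a man or a woman are
  tied.
* Stability constraints (`exists_tied_of_star`): for a vertex `(m, w) ∉ U` of `Γ*`, strict
  betweenness together with stability of `μ` and `μ'` forces, up to swapping `μ` and `μ'`,
  `μ(m) <_m w ≤_m μ'(m)` and `μ'(w) <_w m ≤_w μ(w)`. Hence the stability constraint of `(m, w)` is
  tight, meeting `U` exactly in `(m, μ'(m))` and `(μ(w), w)`, which are therefore tied.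

So all pairs of `U` that share a man or a woman with a given vertex of `Γ*` are tied
(`tied_of_share`). Adjacent vertices of `Γ*` share a man or a woman, and hence such a pair of `U`;
the theorem follows by induction along a path.
-/

open scoped Classical

/-- An instance of the stable marriage problem with ties: men `M`, women `W`,
acceptable pairs `Acc`, and for each man (resp. woman) a total preorder on the
acceptable partners. `mle m w w'` means `w ≤_m w'`, `wle w m m'` means `m ≤_w m'`. -/
structure SMTI (M W : Type*) where
  Acc : Set (M × W)
  mle : M → W → W → Prop
  wle : W → M → M → Prop
  mle_refl : ∀ m w, (m, w) ∈ Acc → mle m w w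
  mle_trans : ∀ m w₁ w₂ w₃, mle m w₁ w₂ → mle m w₂ w₃ → mle m w₁ w₃
  mle_total : ∀ m w w', (m, w) ∈ Acc → (m, w') ∈ Acc → mle m w w' ∨ mle m w' w
  mle_mem : ∀ m w w', mle m w w' → (m, w) ∈ Acc ∧ (m, w') ∈ Acc
  wle_refl : ∀ w m, (m, w) ∈ Acc → wle w m m
  wle_trans : ∀ w m₁ m₂ m₃, wle w m₁ m₂ → wle w m₂ m₃ → wle w m₁ m₃
  wle_total : ∀ w m m', (m, w) ∈ Acc → (m', w) ∈ Acc → wle w m m' ∨ wle w m' m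
  wle_mem : ∀ w m m', wle w m m' → (m, w) ∈ Acc ∧ (m', w) ∈ Acc

namespace SMTI

variable {M W : Type*} (I : SMTI M W)

/-- `≤_m` extended to `Option W`, where `none` (being single) is strictly below
every acceptable partner. -/
def mleO (m : M) : Option W → Option W → Prop
  | none, none => True
  | none, some w => (m, w) ∈ I.Acc
  | some _, none => False
  | some w, some w' => I.mle m w w'

/-- `≤_w` extended to `Option M`. -/
def wleO (w : W) : Option M → Option M → Prop
  | none, none => True
  | none, some m => (m, w) ∈ I.Acc
  | some _, none => False
  | some m, some m' => I.wle w m m'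

/-- strict version of `mleO` -/
def mltO (m : M) (a b : Option W) : Prop := I.mleO m a b ∧ ¬ I.mleO m b a

/-- strict version of `wleO` -/
def wltO (w : W) (a b : Option M) : Prop := I.wleO w a b ∧ ¬ I.wleO w b a

/-- A matching: a set of acceptable pairs in which every man and every woman
occurs at most once. -/
def IsMatching (μ : Set (M × W)) : Prop :=
  μ ⊆ I.Acc ∧ (∀ m w w', (m, w) ∈ μ → (m, w') ∈ μ → w = w') ∧
    (∀ m m' w, (m, w) ∈ μ → (m', w) ∈ μ → m = m')

/-- the partner `μ(m)` of a man `m` (`none` if `m` is single) -/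
noncomputable def mpartner (μ : Set (M × W)) (m : M) : Option W :=
  if h : ∃ w, (m, w) ∈ μ then some h.choose else none

/-- the partner `μ(w)` of a woman `w` (`none` if `w` is single) -/
noncomputable def wpartner (μ : Set (M × W)) (w : W) : Option M :=
  if h : ∃ m, (m, w) ∈ μ then some h.choose else none

/-- A stable matching: no acceptable pair is blocking. -/
def IsStable (μ : Set (M × W)) : Prop :=
  I.IsMatching μ ∧ ∀ p ∈ I.Acc,
    I.mleO p.1 (some p.2) (mpartner μ p.1) ∨ I.wleO p.2 (some p.1) (wpartner μ p.2)

/-- `between_m(a, b, c)` -/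
def betweenM (m : M) (a b c : Option W) : Prop :=
  a = b ∨ a = c ∨ (I.mltO m b a ∧ I.mleO m a c) ∨ (I.mltO m c a ∧ I.mleO m a b)

/-- `between_w(a, b, c)` -/
def betweenW (w : W) (a b c : Option M) : Prop :=
  a = b ∨ a = c ∨ (I.wltO w b a ∧ I.wleO w a c) ∨ (I.wltO w c a ∧ I.wleO w a b)

/-- the (directed) edge relation of the marriage graph `Γ` -/
def gammaEdge (p q : M × W) : Prop :=
  p ∈ I.Acc ∧ q ∈ I.Acc ∧
    ((p.1 = q.1 ∧ p.2 ≠ q.2 ∧ I.mle p.1 p.2 q.2) ∨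
      (p.2 = q.2 ∧ p.1 ≠ q.1 ∧ I.wle p.2 p.1 q.1))

/-- the vertex set of `Γ*(μ, μ')` -/
noncomputable def starV (μ μ' : Set (M × W)) : Set (M × W) :=
  {p | p ∈ I.Acc ∧
    I.betweenM p.1 (some p.2) (mpartner μ p.1) (mpartner μ' p.1) ∧
    I.betweenW p.2 (some p.1) (wpartner μ p.2) (wpartner μ' p.2)}

/-- undirected adjacency inside the subgraph of `Γ` induced by the vertex set `S` -/
def adjIn (S : Set (M × W)) (p q : M × W) : Prop :=
  p ∈ S ∧ q ∈ S ∧ (I.gammaEdge p q ∨ I.gammaEdge q p)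

/-- `p` and `q` lie in the same weakly connected component of the subgraph of `Γ`
induced by `S` -/
def connIn (S : Set (M × W)) (p q : M × W) : Prop :=
  p ∈ S ∧ q ∈ S ∧ Relation.ReflTransGen (I.adjIn S) p q

/-- `p` is an isolated vertex of the subgraph of `Γ` induced by `S` -/
def IsIsolated (S : Set (M × W)) (p : M × W) : Prop :=
  p ∈ S ∧ ∀ q, ¬ I.adjIn S p q

/-- `C` is a nontrivial weakly connected component of the subgraph of `Γ`
induced by `S` -/
def IsNontrivialComp (S : Set (M × W)) (C : Set (M × W)) : Prop :=
  (∃ v ∈ S, C = {u | I.connIn S v u}) ∧ ¬ C.Subsingleton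

/-- `B` is the vertex set of a principal block (`P^m` or `P^w`) of the subgraph
of `Γ` induced by `S` -/
def IsPrincipalBlock (S : Set (M × W)) (B : Set (M × W)) : Prop :=
  (∃ m : M, B = {p ∈ S | p.1 = m}) ∨ (∃ w : W, B = {p ∈ S | p.2 = w})

/-- characteristic vector `x_ν ∈ ℝ^A` of a set of pairs -/
noncomputable def chi (ν : Set (M × W)) : M × W → ℝ := fun p => if p ∈ ν then 1 else 0

/-- standard basis vector `e_v` -/
noncomputable def eVec (v : M × W) : M × W → ℝ := fun p => if p = v then 1 else 0

/-- dot product on `ℝ^{M × W}` -/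
noncomputable def dotP [Fintype M] [Fintype W] (α x : M × W → ℝ) : ℝ := ∑ p, α p * x p

/-- `E`: the span of all vectors `α` (supported on the acceptable pairs) for which
there is `β` so that `α · x ≥ β` is valid for all stable matchings and tight at
both `μ` and `μ'`. -/
noncomputable def Espace [Fintype M] [Fintype W] (μ μ' : Set (M × W)) :
    Submodule ℝ (M × W → ℝ) :=
  Submodule.span ℝ {α | (∀ p, p ∉ I.Acc → α p = 0) ∧ ∃ β : ℝ,
    (∀ ν, I.IsStable ν → β ≤ dotP α (chi ν)) ∧
    dotP α (chi μ) = β ∧ dotP α (chi μ') = β}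

/-- `a` is linked to `b`: `E` contains `λ e_a + γ e_b` with `λ ≠ 0`. -/
def linked [Fintype M] [Fintype W] (μ μ' : Set (M × W)) (a b : M × W) : Prop :=
  ∃ l g : ℝ, l ≠ 0 ∧ l • eVec a + g • eVec b ∈ I.Espace μ μ'

/-- `x_μ` and `x_μ'` are adjacent extreme points of `P_SMT`: they are distinct, and
whenever their midpoint is a convex combination of extreme points (characteristic
vectors of stable matchings), only `x_μ` and `x_μ'` get nonzero weight. -/
def AdjacentSM [Fintype M] [Fintype W] (μ μ' : Set (M × W)) : Prop :=
  chi μ ≠ chi μ' ∧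
  ∀ (T : Finset (Set (M × W))) (c : Set (M × W) → ℝ),
    (∀ ν ∈ T, I.IsStable ν) → (∀ ν ∈ T, 0 ≤ c ν) → (∑ ν ∈ T, c ν) = 1 →
    (∑ ν ∈ T, c ν • chi ν) = (2⁻¹ : ℝ) • (chi μ + chi μ') →
    ∀ ν ∈ T, c ν ≠ 0 → chi ν = chi μ ∨ chi ν = chi μ'

end SMTI

namespace SMTI

/-! ### Partners in a matching -/

section Partner

variable {M W : Type*} {I : SMTI M W} {μ : Set (M × W)}

lemma mpartner_eq_some (h : I.IsMatching μ) {m : M} {w : W} :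
    mpartner μ m = some w ↔ (m, w) ∈ μ := by
  unfold mpartner
  split_ifs with hex
  · rw [Option.some_inj]
    exact ⟨fun e => e ▸ hex.choose_spec, fun hw => h.2.1 _ _ _ hex.choose_spec hw⟩
  · exact ⟨fun e => by simp at e, fun hw => (hex ⟨w, hw⟩).elim⟩

lemma wpartner_eq_some (h : I.IsMatching μ) {m : M} {w : W} :
    wpartner μ w = some m ↔ (m, w) ∈ μ := by
  unfold wpartner
  split_ifs with hex
  · rw [Option.some_inj]
    exact ⟨fun e => e ▸ hex.choose_spec, fun hw => h.2.2 _ _ _ hex.choose_spec hw⟩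
  · exact ⟨fun e => by simp at e, fun hw => (hex ⟨m, hw⟩).elim⟩

lemma mleO_mpartner (h : I.IsMatching μ) {m : M} {w : W} :
    I.mleO m (some w) (mpartner μ m) ↔ ∃ w', (m, w') ∈ μ ∧ I.mle m w w' := by
  simp_rw [← mpartner_eq_some h]
  cases mpartner μ m <;> simp [mleO]

lemma wleO_wpartner (h : I.IsMatching μ) {m : M} {w : W} :
    I.wleO w (some m) (wpartner μ w) ↔ ∃ m', (m', w) ∈ μ ∧ I.wle w m m' := by
  simp_rw [← wpartner_eq_some h]
  cases wpartner μ w <;> simp [wleO]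

end Partner

variable {M W : Type*} [Fintype M] [Fintype W] {I : SMTI M W} {μ μ' : Set (M × W)}

/-! ### Inner products with characteristic vectors -/

lemma dotP_smul (c : ℝ) (α x : M × W → ℝ) : dotP (c • α) x = c * dotP α x := by
  simp [dotP, Finset.mul_sum, mul_assoc]

lemma dotP_chi_eq_one {S ν : Set (M × W)} {a : M × W} (h : S ∩ ν = {a}) :
    dotP (chi S) (chi ν) = 1 := by
  have key : ∀ p, chi S p * chi ν p = if p = a then (1 : ℝ) else 0 := by
    intro p
    have hp : (p ∈ S ∧ p ∈ ν) ↔ p = a := by rw [← Set.mem_inter_iff, h, Set.mem_singleton_iff]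
    by_cases h1 : p ∈ S <;> by_cases h2 : p ∈ ν <;> simp_all [chi]
  simp [dotP, key]

lemma one_le_dotP_chi {S ν : Set (M × W)} (h : (S ∩ ν).Nonempty) :
    1 ≤ dotP (chi S) (chi ν) := by
  obtain ⟨a, ha, ha'⟩ := h
  have h0 : ∀ p ∈ Finset.univ, (0 : ℝ) ≤ chi S p * chi ν p := by
    intro p _
    unfold chi
    split_ifs <;> simp
  have := Finset.single_le_sum h0 (Finset.mem_univ a)
  simpa [dotP, chi, ha, ha'] using this

lemma dotP_chi_le_one {S ν : Set (M × W)} (h : (S ∩ ν).Subsingleton) :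
    dotP (chi S) (chi ν) ≤ 1 := by
  rcases h.eq_empty_or_singleton with h | ⟨a, h⟩
  · have key : ∀ p, chi S p * chi ν p = (0 : ℝ) := by
      intro p
      have hp : ¬ (p ∈ S ∧ p ∈ ν) := by rw [← Set.mem_inter_iff, h]; simp
      by_cases h1 : p ∈ S <;> by_cases h2 : p ∈ ν <;> simp_all [chi]
    simp [dotP, key]
  · exact (dotP_chi_eq_one h).le

/-! ### Restricting vectors of `E` to `μ ∪ μ'` -/

lemma Espace_comm (I : SMTI M W) (μ μ' : Set (M × W)) : I.Espace μ μ' = I.Espace μ' μ := by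
  unfold Espace
  congr 1
  ext α
  simp only [Set.mem_ofPred_eq]
  refine and_congr_right fun _ => exists_congr fun β => and_congr_right fun _ => and_comm

lemma eVec_mem {p : M × W} (hp : p ∈ I.Acc) (h : p ∉ μ ∪ μ') : eVec p ∈ I.Espace μ μ' := by
  have key : ∀ x : M × W → ℝ, dotP (eVec p) x = x p := by
    intro x
    simp [dotP, eVec]
  refine Submodule.subset_span ⟨?_, 0, ?_, ?_, ?_⟩
  · intro q hq
    have : q ≠ p := fun e => hq (e ▸ hp)
    simp [eVec, this]
  · intro ν _
    rw [key]
    unfold chi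
    split_ifs <;> simp
  · rw [key]
    simp [chi, show p ∉ μ from fun h' => h (Or.inl h')]
  · rw [key]
    simp [chi, show p ∉ μ' from fun h' => h (Or.inr h')]

/-- Since `e_p ∈ E` for acceptable `p ∉ μ ∪ μ'`, the coordinates outside `μ ∪ μ'` can be deleted. -/
lemma restrict_mem {α : M × W → ℝ} (hα : α ∈ I.Espace μ μ') (hs : ∀ p, p ∉ I.Acc → α p = 0) :
    (fun p => if p ∈ μ ∪ μ' then α p else 0) ∈ I.Espace μ μ' := by
  have hsum : (∑ p, if p ∈ μ ∪ μ' then 0 else α p • eVec p) ∈ I.Espace μ μ' := by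
    refine Submodule.sum_mem _ fun p _ => ?_
    split_ifs with hp
    · exact Submodule.zero_mem _
    · by_cases hA : p ∈ I.Acc
      · exact Submodule.smul_mem _ _ (eVec_mem hA hp)
      · rw [hs p hA, zero_smul]
        exact Submodule.zero_mem _
  convert Submodule.sub_mem _ hα hsum using 1
  funext q
  have : ∀ p, (if p ∈ μ ∪ μ' then (0 : M × W → ℝ) else α p • eVec p) q
      = if q = p then (if q ∈ μ ∪ μ' then 0 else α q) else 0 := by
    intro p
    by_cases hqp : q = p
    · subst hqp
      by_cases hq : q ∈ μ ∪ μ' <;> simp [hq, eVec]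
    · by_cases hp : p ∈ μ ∪ μ' <;> simp [hp, hqp, eVec]
  rw [Pi.sub_apply, Finset.sum_apply, Finset.sum_congr rfl fun p _ => this p]
  by_cases hq : q ∈ μ ∪ μ' <;> simp [hq]

/-! ### Tied pairs -/

/-- A symmetric strengthening of `linked`: `E` contains `e_a + e_b` or `e_a - e_b`. -/
def Tied (I : SMTI M W) (μ μ' : Set (M × W)) (a b : M × W) : Prop :=
  eVec a + eVec b ∈ I.Espace μ μ' ∨ eVec a - eVec b ∈ I.Espace μ μ'

lemma Tied.refl (a : M × W) : Tied I μ μ' a a := Or.inr (by simp)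

lemma Tied.symm {a b : M × W} (h : Tied I μ μ' a b) : Tied I μ μ' b a := by
  rcases h with h | h
  · exact Or.inl (by rwa [add_comm])
  · exact Or.inr (by simpa using Submodule.neg_mem _ h)

lemma Tied.trans {a b c : M × W} (h : Tied I μ μ' a b) (h' : Tied I μ μ' b c) :
    Tied I μ μ' a c := by
  rcases h with h | h <;> rcases h' with h' | h'
  · refine Or.inr ?_
    have := Submodule.sub_mem _ h h'
    rwa [show eVec a + eVec b - (eVec b + eVec c) = (eVec a - eVec c : M × W → ℝ) by abel] at this
  · refine Or.inl ?_
    have := Submodule.sub_mem _ h h'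
    rwa [show eVec a + eVec b - (eVec b - eVec c) = (eVec a + eVec c : M × W → ℝ) by abel] at this
  · refine Or.inl ?_
    have := Submodule.add_mem _ h h'
    rwa [show eVec a - eVec b + (eVec b + eVec c) = (eVec a + eVec c : M × W → ℝ) by abel] at this
  · exact Or.inr (by simpa using Submodule.add_mem _ h h')

lemma Tied.comm {a b : M × W} (h : Tied I μ μ' a b) : Tied I μ' μ a b := by
  unfold Tied at *
  rwa [Espace_comm]

lemma Tied.linked {a b : M × W} (h : Tied I μ μ' a b) : I.linked μ μ' a b := by
  rcases h with h | h
  · exact ⟨1, 1, one_ne_zero, by simpa using h⟩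
  · exact ⟨1, -1, one_ne_zero, by simpa [sub_eq_add_neg] using h⟩

/-- A valid inequality `c * x(S) ≥ c` ties the unique elements of `S ∩ μ` and `S ∩ μ'`. The sign of
`c` allows for both covering and packing constraints. -/
lemma tied_of_chi {S : Set (M × W)} {a b : M × W} {c : ℝ} (hc : c ≠ 0) (hS : S ⊆ I.Acc)
    (hv : ∀ ν, I.IsStable ν → c ≤ c * dotP (chi S) (chi ν))
    (ha : S ∩ μ = {a}) (hb : S ∩ μ' = {b}) : Tied I μ μ' a b := by
  by_cases hab : a = b
  · subst hab
    exact Tied.refl a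
  have hs : ∀ p, p ∉ I.Acc → (c • chi S : M × W → ℝ) p = 0 := by
    intro p hp
    have : p ∉ S := fun h => hp (hS h)
    simp [chi, this]
  have hE : (c • chi S : M × W → ℝ) ∈ I.Espace μ μ' := by
    refine Submodule.subset_span ⟨hs, c, fun ν hν => ?_, ?_, ?_⟩
    · rw [dotP_smul]
      exact hv ν hν
    · rw [dotP_smul, dotP_chi_eq_one ha, mul_one]
    · rw [dotP_smul, dotP_chi_eq_one hb, mul_one]
  have hr := Submodule.smul_mem _ c⁻¹ (restrict_mem hE hs)
  left
  convert hr using 1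
  funext q
  have h1 : (q ∈ S ∧ q ∈ μ) ↔ q = a := by rw [← Set.mem_inter_iff, ha, Set.mem_singleton_iff]
  have h2 : (q ∈ S ∧ q ∈ μ') ↔ q = b := by rw [← Set.mem_inter_iff, hb, Set.mem_singleton_iff]
  have h3 : (q ∈ S ∧ q ∈ μ ∪ μ') ↔ (q = a ∨ q = b) := by
    rw [← h1, ← h2, Set.mem_union, and_or_left]
  rw [Pi.add_apply, Pi.smul_apply, smul_eq_mul]
  by_cases hq : q = a ∨ q = b
  · obtain ⟨hqS, hqU⟩ := h3.2 hq
    rw [if_pos hqU]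
    rcases hq with rfl | rfl
    · simp [eVec, chi, hqS, hab, hc]
    · simp [eVec, chi, hqS, Ne.symm hab, hc]
  · have h0 : (if q ∈ μ ∪ μ' then (c • chi S : M × W → ℝ) q else 0) = 0 := by
      split_ifs with hqU
      · have hqS : q ∉ S := fun h => hq (h3.1 ⟨h, hqU⟩)
        simp [chi, hqS]
      · rfl
    rw [h0]
    rw [not_or] at hq
    simp [eVec, hq.1, hq.2]

lemma tied_of_packing {S : Set (M × W)} {a b : M × W} (hS : S ⊆ I.Acc)
    (hv : ∀ ν, I.IsStable ν → (S ∩ ν).Subsingleton) (hμ : I.IsStable μ) (hμ' : I.IsStable μ')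
    (ha : a ∈ S ∩ μ) (hb : b ∈ S ∩ μ') : Tied I μ μ' a b := by
  refine tied_of_chi (c := -1) (by norm_num) hS (fun ν hν => ?_)
    ((hv μ hμ).eq_singleton_of_mem ha) ((hv μ' hμ').eq_singleton_of_mem hb)
  have := dotP_chi_le_one (hv ν hν)
  linarith

lemma tied_of_covering {S : Set (M × W)} {a b : M × W} (hS : S ⊆ I.Acc)
    (hv : ∀ ν, I.IsStable ν → (S ∩ ν).Nonempty)
    (ha : S ∩ μ = {a}) (hb : S ∩ μ' = {b}) : Tied I μ μ' a b := by
  refine tied_of_chi (c := 1) one_ne_zero hS (fun ν hν => ?_) ha hb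
  rw [one_mul]
  exact one_le_dotP_chi (hv ν hν)

/-! ### Degree and stability constraints -/

lemma tied_of_row (hμ : I.IsStable μ) (hμ' : I.IsStable μ') {a b : M × W} (ha : a ∈ μ ∪ μ')
    (hb : b ∈ μ ∪ μ') (h : a.1 = b.1) : Tied I μ μ' a b := by
  have hv : ∀ ν, I.IsStable ν → ({q | q ∈ I.Acc ∧ q.1 = a.1} ∩ ν).Subsingleton := by
    rintro ν hν ⟨m, w⟩ ⟨⟨-, h1⟩, h2⟩ ⟨m', w'⟩ ⟨⟨-, h3⟩, h4⟩
    obtain rfl : m = m' := h1.trans h3.symm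
    rw [hν.1.2.1 _ _ _ h2 h4]
  have hS : {q | q ∈ I.Acc ∧ q.1 = a.1} ⊆ I.Acc := fun _ hq => hq.1
  rcases ha with ha | ha <;> rcases hb with hb | hb
  · rw [hv μ hμ ⟨⟨hμ.1.1 ha, rfl⟩, ha⟩ ⟨⟨hμ.1.1 hb, h.symm⟩, hb⟩]
    exact Tied.refl _
  · exact tied_of_packing hS hv hμ hμ' ⟨⟨hμ.1.1 ha, rfl⟩, ha⟩ ⟨⟨hμ'.1.1 hb, h.symm⟩, hb⟩
  · exact (tied_of_packing hS hv hμ hμ' ⟨⟨hμ.1.1 hb, h.symm⟩, hb⟩ ⟨⟨hμ'.1.1 ha, rfl⟩, ha⟩).symm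
  · rw [hv μ' hμ' ⟨⟨hμ'.1.1 ha, rfl⟩, ha⟩ ⟨⟨hμ'.1.1 hb, h.symm⟩, hb⟩]
    exact Tied.refl _

lemma tied_of_col (hμ : I.IsStable μ) (hμ' : I.IsStable μ') {a b : M × W} (ha : a ∈ μ ∪ μ')
    (hb : b ∈ μ ∪ μ') (h : a.2 = b.2) : Tied I μ μ' a b := by
  have hv : ∀ ν, I.IsStable ν → ({q | q ∈ I.Acc ∧ q.2 = a.2} ∩ ν).Subsingleton := by
    rintro ν hν ⟨m, w⟩ ⟨⟨-, h1⟩, h2⟩ ⟨m', w'⟩ ⟨⟨-, h3⟩, h4⟩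
    obtain rfl : w = w' := h1.trans h3.symm
    rw [hν.1.2.2 _ _ _ h2 h4]
  have hS : {q | q ∈ I.Acc ∧ q.2 = a.2} ⊆ I.Acc := fun _ hq => hq.1
  rcases ha with ha | ha <;> rcases hb with hb | hb
  · rw [hv μ hμ ⟨⟨hμ.1.1 ha, rfl⟩, ha⟩ ⟨⟨hμ.1.1 hb, h.symm⟩, hb⟩]
    exact Tied.refl _
  · exact tied_of_packing hS hv hμ hμ' ⟨⟨hμ.1.1 ha, rfl⟩, ha⟩ ⟨⟨hμ'.1.1 hb, h.symm⟩, hb⟩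
  · exact (tied_of_packing hS hv hμ hμ' ⟨⟨hμ.1.1 hb, h.symm⟩, hb⟩ ⟨⟨hμ'.1.1 ha, rfl⟩, ha⟩).symm
  · rw [hv μ' hμ' ⟨⟨hμ'.1.1 ha, rfl⟩, ha⟩ ⟨⟨hμ'.1.1 hb, h.symm⟩, hb⟩]
    exact Tied.refl _

/-- The stability constraint of `(m, w)` when `μ(m) <_m w ≤_m μ'(m)`: stability of `μ` excludes
`μ(w) <_w m`, so only the other alternative `μ'(w) <_w m ≤_w μ(w)` remains for the woman. -/
lemma exists_tied_of_lt (hμ : I.IsStable μ) (hμ' : I.IsStable μ') {m : M} {w : W}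
    (hA : (m, w) ∈ I.Acc)
    (h1 : ¬ I.mleO m (some w) (mpartner μ m)) (h2 : I.mleO m (some w) (mpartner μ' m))
    (h3 : ¬ I.wleO w (some m) (wpartner μ w) ∨ ¬ I.wleO w (some m) (wpartner μ' w)) :
    ∃ a ∈ μ ∪ μ', ∃ b ∈ μ ∪ μ', a.1 = m ∧ b.2 = w ∧ Tied I μ μ' a b := by
  have h4 : I.wleO w (some m) (wpartner μ w) := (hμ.2 _ hA).resolve_left h1
  have h5 : ¬ I.wleO w (some m) (wpartner μ' w) := h3.resolve_left (not_not_intro h4)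
  rw [mleO_mpartner hμ.1] at h1
  rw [mleO_mpartner hμ'.1] at h2
  rw [wleO_wpartner hμ.1] at h4
  rw [wleO_wpartner hμ'.1] at h5
  obtain ⟨w', hw', hle⟩ := h2
  obtain ⟨m', hm', hle'⟩ := h4
  refine ⟨(m, w'), Or.inr hw', (m', w), Or.inl hm', rfl, rfl, Tied.symm ?_⟩
  refine tied_of_covering
    (S := {q | (q.1 = m ∧ I.mle m w q.2) ∨ (q.2 = w ∧ I.wle w m q.1)}) ?_ ?_ ?_ ?_
  · rintro ⟨x, y⟩ (⟨hx, h⟩ | ⟨hx, h⟩) <;> dsimp only at hx h <;> subst hx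
    · exact (I.mle_mem _ _ _ h).2
    · exact (I.wle_mem _ _ _ h).2
  · intro ν hν
    rcases hν.2 _ hA with h | h
    · obtain ⟨y, hy, hl⟩ := (mleO_mpartner hν.1).1 h
      exact ⟨(m, y), Or.inl ⟨rfl, hl⟩, hy⟩
    · obtain ⟨x, hx, hl⟩ := (wleO_wpartner hν.1).1 h
      exact ⟨(x, w), Or.inr ⟨rfl, hl⟩, hx⟩
  · refine Set.eq_singleton_iff_unique_mem.2 ⟨⟨Or.inr ⟨rfl, hle'⟩, hm'⟩, ?_⟩
    rintro ⟨x, y⟩ ⟨⟨hx, h⟩ | ⟨hx, h⟩, hq⟩ <;> dsimp only at hx h <;> subst hx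
    · exact (h1 ⟨y, hq, h⟩).elim
    · rw [hμ.1.2.2 _ _ _ hq hm']
  · refine Set.eq_singleton_iff_unique_mem.2 ⟨⟨Or.inl ⟨rfl, hle⟩, hw'⟩, ?_⟩
    rintro ⟨x, y⟩ ⟨⟨hx, h⟩ | ⟨hx, h⟩, hq⟩ <;> dsimp only at hx h <;> subst hx
    · rw [hμ'.1.2.1 _ _ _ hq hw']
    · exact (h5 ⟨x, hq, h⟩).elim

/-! ### Vertices of `Γ*` -/

/-- Each vertex of `Γ*` shares its man with some pair `a` of `μ ∪ μ'` and its woman with some pair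
`b` of `μ ∪ μ'`, where `a` and `b` are tied. -/
lemma exists_tied_of_star (hμ : I.IsStable μ) (hμ' : I.IsStable μ') {p : M × W}
    (hp : p ∈ I.starV μ μ') :
    ∃ a ∈ μ ∪ μ', ∃ b ∈ μ ∪ μ', a.1 = p.1 ∧ b.2 = p.2 ∧ Tied I μ μ' a b := by
  by_cases hU : p ∈ μ ∪ μ'
  · exact ⟨p, hU, p, hU, rfl, rfl, Tied.refl p⟩
  obtain ⟨m, w⟩ := p
  obtain ⟨hA, hM, hW⟩ := hp
  dsimp only at hM hW ⊢
  have hW' : ¬ I.wleO w (some m) (wpartner μ w) ∨ ¬ I.wleO w (some m) (wpartner μ' w) := by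
    rcases hW with h | h | h | h
    · exact (hU (Or.inl ((wpartner_eq_some hμ.1).1 h.symm))).elim
    · exact (hU (Or.inr ((wpartner_eq_some hμ'.1).1 h.symm))).elim
    · exact Or.inl h.1.2
    · exact Or.inr h.1.2
  rcases hM with h | h | h | h
  · exact (hU (Or.inl ((mpartner_eq_some hμ.1).1 h.symm))).elim
  · exact (hU (Or.inr ((mpartner_eq_some hμ'.1).1 h.symm))).elim
  · exact exists_tied_of_lt hμ hμ' hA h.1.2 h.2 hW'
  · obtain ⟨a, ha, b, hb, h1, h2, h3⟩ := exists_tied_of_lt hμ' hμ hA h.1.2 h.2 hW'.symm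
    exact ⟨a, ha.symm, b, hb.symm, h1, h2, h3.comm⟩

/-- All pairs of `μ ∪ μ'` sharing a man or a woman with a given vertex of `Γ*` are tied. -/
lemma tied_of_share (hμ : I.IsStable μ) (hμ' : I.IsStable μ') {p q r : M × W}
    (hp : p ∈ I.starV μ μ') (hq : q ∈ μ ∪ μ') (hr : r ∈ μ ∪ μ')
    (hpq : p.1 = q.1 ∨ p.2 = q.2) (hpr : p.1 = r.1 ∨ p.2 = r.2) : Tied I μ μ' q r := by
  obtain ⟨a, ha, b, hb, h1, h2, hab⟩ := exists_tied_of_star hμ hμ' hp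
  have key : ∀ s ∈ μ ∪ μ', (p.1 = s.1 ∨ p.2 = s.2) → Tied I μ μ' a s := by
    rintro s hs (h | h)
    · exact tied_of_row hμ hμ' ha hs (h1.trans h)
    · exact hab.trans (tied_of_col hμ hμ' hb hs (h2.trans h))
  exact (key q hq hpq).symm.trans (key r hr hpr)

end SMTI

open SMTI in

theorem stmt8 {M W : Type*} [Fintype M] [Fintype W] (I : SMTI M W)
    (μ μ' : Set (M × W)) (hμ : I.IsStable μ) (hμ' : I.IsStable μ')
    (u v : M × W) (hu : u ∈ μ ∪ μ') (hv : v ∈ μ ∪ μ') (hne : u ≠ v)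
    (hconn : I.connIn (I.starV μ μ') u v) :
    I.linked μ μ' v u := by
  obtain ⟨huS, -, hpath⟩ := hconn
  -- Every pair of `μ ∪ μ'` sharing a man or a woman with some vertex on the path is tied to `u`.
  have key : ∀ q ∈ μ ∪ μ', (v.1 = q.1 ∨ v.2 = q.2) → Tied I μ μ' u q := by
    clear hv hne
    induction hpath with
    | refl => exact fun q hq h => tied_of_share hμ hμ' huS hu hq (Or.inl rfl) h
    | @tail x y _ hxy ih =>
      intro q hq h
      obtain ⟨hx, hy, hadj⟩ := hxy
      obtain ⟨a, ha, b, hb, h1, h2, -⟩ := exists_tied_of_star hμ hμ' hx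
      have hshare : x.1 = y.1 ∨ x.2 = y.2 := by
        rcases hadj with ⟨-, -, h | h⟩ | ⟨-, -, h | h⟩
        · exact Or.inl h.1
        · exact Or.inr h.1
        · exact Or.inl h.1.symm
        · exact Or.inr h.1.symm
      rcases hshare with hs | hs
      · exact (ih a ha (Or.inl h1.symm)).trans
          (tied_of_share hμ hμ' hy ha hq (Or.inl (hs.symm.trans h1.symm)) h)
      · exact (ih b hb (Or.inr h2.symm)).trans
          (tied_of_share hμ hμ' hy hb hq (Or.inr (hs.symm.trans h2.symm)) h)
  exact (key v hv (Or.inl rfl)).symm.linked
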